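/- Let n ≥ 3 and let G be a simple graph obtained from the cycle v_0 v_1 … v_{n−1} by adding a set D of chords (edges between non-consecutive cycle vertices) that are pairwise non-crossing, i.e., for any two chords {v_a, v_b} and {v_c, v_d} in D, it is not the case that exactly one of v_c, v_d lies strictly inside one of the two arcs of the cycle determined by v_a and v_b, and additionally attaching at most one pendant vertex (a new degree-1 vertex joined by one edge) to each cycle vertex. If G has maximum degree at most 3, then G admits a star edge coloring with 5 colors, i.e., χ'_s(G) ≤ 5. (This is the statement of the theorem 'every subcubic outerplanar graph has star chromatic index at most 5' for graphs with no nontrivial bridge, using the combinatorial description of 2-connected outerplanar graphs as cycles with pairwise non-crossing chords.) -/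

import Mathlib

/-- A star edge coloring of a simple graph with `k` colors: edges sharing an
endpoint receive distinct colors, and on every path with exactly 4 edges
(a walk of length 4 whose five vertices are pairwise distinct) and on every
cycle of length 4, at least three distinct colors appear among the four edges. -/
def IsStarEdgeColoring {V : Type*} {k : ℕ} (G : SimpleGraph V)
    (c : Sym2 V → Fin k) : Prop :=
  (∀ u v w : V, G.Adj u v → G.Adj u w → v ≠ w → c s(u, v) ≠ c s(u, w)) ∧
  (∀ v₀ v₁ v₂ v₃ v₄ : V,
    G.Adj v₀ v₁ → G.Adj v₁ v₂ → G.Adj v₂ v₃ → G.Adj v₃ v₄ →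
    ([v₀, v₁, v₂, v₃, v₄].Pairwise (· ≠ ·) ∨
      (v₀ = v₄ ∧ [v₀, v₁, v₂, v₃].Pairwise (· ≠ ·))) →
    3 ≤ ({c s(v₀, v₁), c s(v₁, v₂), c s(v₂, v₃), c s(v₃, v₄)} : Finset (Fin k)).card)

/-- The star chromatic index of a graph: the least `k` such that `G` admits a
star edge coloring with `k` colors. -/
noncomputable def starChromaticIndex {V : Type*} (G : SimpleGraph V) : ℕ :=
  sInf {k : ℕ | ∃ c : Sym2 V → Fin k, IsStarEdgeColoring G c}

/-- The graph obtained from the cycle `v_0 v_1 … v_{n-1}` by adding the set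
`D` of chords (each chord is recorded as a pair `(a, b)` with `a < b`) and
attaching a pendant vertex to the cycle vertex `i` exactly when `P i` holds. -/
def cycleChordPendant (n : ℕ) [NeZero n] (D : Set (Fin n × Fin n)) (P : Fin n → Prop) :
    SimpleGraph (Fin n ⊕ {i : Fin n // P i}) :=
  SimpleGraph.fromRel fun x y =>
    (∃ i : Fin n, x = Sum.inl i ∧ y = Sum.inl (i + 1)) ∨
    (∃ p ∈ D, x = Sum.inl p.1 ∧ y = Sum.inl p.2) ∨
    (∃ j : {i : Fin n // P i}, x = Sum.inl j.1 ∧ y = Sum.inr j)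

/-- The color `c` does not occur at the cycle vertex `k`; here `E k` is the color of the cycle edge
entering `k` and `M k` is the color of the third edge at `k`. -/
def NotAt (E M : ℕ → Fin 5) (c : Fin 5) (k : ℕ) : Prop :=
  c ≠ E k ∧ c ≠ M k ∧ c ≠ E (k + 1)

/-- A good coloring of the part of the graph strictly between the cycle vertices `i` and `j`, with
prescribed colors at `i` and at `j`. -/
def GoodOn (D : ℕ → ℕ → Prop) (F : Prop) (i j : ℕ) (E M : ℕ → Fin 5) : Prop :=
  (∀ k, i < k → k < j → E k ≠ M k ∧ E k ≠ E (k + 1) ∧ M k ≠ E (k + 1)) ∧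
  (∀ k, i ≤ k → k + 1 < j → NotAt E M (E (k + 2)) k ∨ NotAt E M (E (k + 1)) (k + 2)) ∧
  (F → NotAt E M (E i) (i + 1)) ∧
  NotAt E M (E (j + 1)) (j - 1) ∧
  (∀ a b, i < a → b < j → D a b → M a = M b ∧ E a ≠ E b ∧ E a ≠ E (b + 1) ∧
    E (a + 1) ≠ E b ∧ E (a + 1) ≠ E (b + 1))

def Col (D : ℕ → ℕ → Prop) (F : Prop) (i j : ℕ) (p q e y m r : Fin 5) : Prop :=
  ∃ E M : ℕ → Fin 5, E i = p ∧ M i = q ∧ E (i + 1) = e ∧ E j = y ∧ M j = m ∧ E (j + 1) = r ∧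
    GoodOn D F i j E M

theorem Col.perm {D : ℕ → ℕ → Prop} {F : Prop} {i j : ℕ} {p q e y m r : Fin 5}
    (σ : Equiv.Perm (Fin 5)) (h : Col D F i j p q e y m r) :
    Col D F i j (σ p) (σ q) (σ e) (σ y) (σ m) (σ r) := by
  obtain ⟨E, M, rfl, rfl, rfl, rfl, rfl, rfl, h1, h2, h3, h4, h5⟩ := h
  refine ⟨fun k => σ (E k), fun k => σ (M k), rfl, rfl, rfl, rfl, rfl, rfl, ?_⟩
  unfold GoodOn NotAt at *
  simp only [ne_eq, σ.injective.eq_iff] at *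
  exact ⟨h1, h2, h3, h4, h5⟩

theorem exists_perm (a b c d e : Fin 5) (h : [a, b, c, d, e].Nodup) :
    ∃ σ : Equiv.Perm (Fin 5), σ 0 = a ∧ σ 1 = b ∧ σ 2 = c ∧ σ 3 = d ∧ σ 4 = e := by
  have hi : Function.Injective ![a, b, c, d, e] := by
    intro x y hxy
    simp at h
    fin_cases x <;> fin_cases y <;> simp at hxy ⊢ <;> simp_all
  refine ⟨Equiv.ofBijective _ (Finite.injective_iff_bijective.1 hi), ?_⟩
  simp

theorem exists_two : ∀ a b c : Fin 5, a ≠ b → a ≠ c → b ≠ c →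
    ∃ d e, [a, b, c, d, e].Nodup := by decide

theorem Col.single_dot {D : ℕ → ℕ → Prop} (hD : ∀ a b, D a b → a + 1 < b) {F : Prop} {i : ℕ}
    {p q e y m r : Fin 5} (t : Fin 5) (h1 : e ≠ t) (h2 : e ≠ y) (h3 : t ≠ y)
    (h4 : F → p ≠ e ∧ p ≠ t ∧ p ≠ y)
    (h5 : (y ≠ p ∧ y ≠ q ∧ y ≠ e) ∨ (e ≠ y ∧ e ≠ m ∧ e ≠ r))
    (h6 : r ≠ e ∧ r ≠ t ∧ r ≠ y) : Col D F i (i + 2) p q e y m r := by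
  refine ⟨fun k => if k = i then p else if k = i + 1 then e else if k = i + 2 then y else r,
    fun k => if k = i then q else if k = i + 1 then t else m, ?_⟩
  have n1 : i + 2 + 1 ≠ i := by omega
  have n2 : i + 1 + 1 ≠ i := by omega
  simp only [GoodOn, NotAt]
  refine ⟨by simp, by simp, by simp, by simp, by simp, by simp [n1], ?_, ?_, ?_, ?_, ?_⟩
  · intro k hk hk'
    obtain rfl : k = i + 1 := by omega
    simp [h1, h2, h3, n2]
  · intro k hk hk'
    obtain rfl : k = i := by omega
    simpa [n1] using h5
  · simpa [n2] using h4
  · simpa [n1, n2] using h6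
  · intro a b ha hb hab
    have := hD a b hab
    omega

theorem Col.cons_dot {D : ℕ → ℕ → Prop} (hD : ∀ a b, D a b → a + 1 < b) {F : Prop} {i j : ℕ} (hij : i + 2 < j)
    {p q e y m r : Fin 5} (hd : ∀ b, ¬ D (i + 1) b) (f t : Fin 5) (h1 : e ≠ t) (h2 : e ≠ f)
    (h3 : t ≠ f) (h4 : F → p ≠ e ∧ p ≠ t ∧ p ≠ f)
    (h : Col D (f = p ∨ f = q) (i + 1) j e t f y m r) : Col D F i j p q e y m r := by
  obtain ⟨E, M, rfl, rfl, rfl, rfl, rfl, rfl, g1, g2, g3, g4, g5⟩ := h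
  have hE : ∀ k, i < k → (fun k => if k = i then p else E k) k = E k := by
    intro k hk; simp; intro; omega
  have hM : ∀ k, i < k → (fun k => if k = i then q else M k) k = M k := by
    intro k hk; simp; intro; omega
  have hEi : (fun k => if k = i then p else E k) i = p := by simp
  have hMi : (fun k => if k = i then q else M k) i = q := by simp
  refine ⟨fun k => if k = i then p else E k, fun k => if k = i then q else M k, ?_⟩
  revert hE hM hEi hMi
  generalize (fun k => if k = i then p else E k) = E'
  generalize (fun k => if k = i then q else M k) = M'
  intro hE hM hEi hMi
  unfold GoodOn NotAt at *
  refine ⟨hEi, hMi, hE _ (by omega), hE _ (by omega), hM _ (by omega), hE _ (by omega),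
    ?_, ?_, ?_, ?_, ?_⟩
  · intro k hk hk'
    rw [hE k hk, hM k hk, hE (k + 1) (by omega)]
    rcases Nat.lt_or_ge (i + 1) k with h | h
    · exact g1 k h hk'
    · obtain rfl : k = i + 1 := by omega
      exact ⟨h1, h2, h3⟩
  · intro k hk hk'
    rcases Nat.lt_or_ge i k with h | h
    · rw [hE k h, hM k h, hE (k + 1) (by omega), hE (k + 2) (by omega), hE (k + 2 + 1) (by omega),
        hM (k + 2) (by omega)]
      exact g2 k h hk'
    · obtain rfl : k = i := by omega
      rw [hEi, hMi, hE (k + 1) (by omega), hE (k + 2) (by omega), hE (k + 2 + 1) (by omega),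
        hM (k + 2) (by omega)]
      by_cases hf : E (k + 1 + 1) = p ∨ E (k + 1 + 1) = q
      · exact Or.inr (g3 hf)
      · push Not at hf
        exact Or.inl ⟨hf.1, hf.2, h2.symm⟩
  · intro hF
    rw [hEi, hE (i + 1) (by omega), hE (i + 1 + 1) (by omega), hM (i + 1) (by omega)]
    exact h4 hF
  · rw [hE (j + 1) (by omega), hE (j - 1) (by omega), hE (j - 1 + 1) (by omega),
      hM (j - 1) (by omega)]
    exact g4
  · intro a b ha hb hab
    by_cases hai : a = i + 1
    · subst hai; exact absurd hab (hd b)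
    · have hbi : i < b := by have := hD a b hab; omega
      rw [hE a ha, hM a ha, hE (a + 1) (by omega), hE b hbi, hM b hbi, hE (b + 1) (by omega)]
      exact g5 a b (by omega) hb hab

theorem Col.single_block {D : ℕ → ℕ → Prop} (hD : ∀ a b, D a b → a + 1 < b)
    (hl : ∀ a b c, D a b → D a c → b = c) (hr : ∀ a b c, D a c → D b c → a = b)
    {F : Prop} {i b : ℕ} (hb : D (i + 1) b)
    {p q e y m r : Fin 5} (x' m' y' : Fin 5) (hnd : [e, m', x', y', y].Nodup)
    (h4 : F → p ≠ e ∧ p ≠ m' ∧ p ≠ x') (h6 : r ≠ y' ∧ r ≠ m' ∧ r ≠ y)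
    (h : Col D True (i + 1) b e m' x' y' m' y) : Col D F i (b + 1) p q e y m r := by
  have hib := hD _ _ hb
  obtain ⟨E, M, a1, a2, a3, a4, a5, a6, g1, g2, g3, g4, g5⟩ := h
  have hE : ∀ k, i < k → k ≤ b + 1 →
      (fun k => if k = i then p else if k ≤ b + 1 then E k else r) k = E k := by
    intro k hk hk'; simp only; rw [if_neg (by omega), if_pos hk']
  have hM : ∀ k, i < k → k ≤ b → (fun k => if k = i then q else if k ≤ b then M k else m) k = M k := by
    intro k hk hk'; simp only; rw [if_neg (by omega), if_pos hk']
  have hEi : (fun k => if k = i then p else if k ≤ b + 1 then E k else r) i = p := by simp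
  have hMi : (fun k => if k = i then q else if k ≤ b then M k else m) i = q := by simp
  have hEj : (fun k => if k = i then p else if k ≤ b + 1 then E k else r) (b + 1 + 1) = r := by
    simp only; rw [if_neg (by omega), if_neg (by omega)]
  have hMj : (fun k => if k = i then q else if k ≤ b then M k else m) (b + 1) = m := by
    simp only; rw [if_neg (by omega), if_neg (by omega)]
  refine ⟨fun k => if k = i then p else if k ≤ b + 1 then E k else r,
    fun k => if k = i then q else if k ≤ b then M k else m, ?_⟩
  revert hE hM hEi hMi hEj hMj
  generalize (fun k => if k = i then p else if k ≤ b + 1 then E k else r) = E'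
  generalize (fun k => if k = i then q else if k ≤ b then M k else m) = M'
  intro hE hM hEi hMi hEj hMj
  simp only [List.nodup_cons, List.mem_cons, List.not_mem_nil, or_false, not_or] at hnd
  obtain ⟨⟨n1, n2, n3, n4⟩, ⟨n5, n6, n7⟩, ⟨n8, n9⟩, n10, -⟩ := hnd
  unfold GoodOn NotAt at *
  refine ⟨hEi, hMi, by rw [hE _ (by omega) (by omega), a1],
    by rw [hE _ (by omega) (by omega), a6], hMj, hEj, ?_, ?_, ?_, ?_, ?_⟩
  · intro k hk hk'
    rw [hE k hk (by omega), hM k hk (by omega), hE (k + 1) (by omega) (by omega)]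
    by_cases k1 : k = i + 1
    · subst k1; rw [a1, a2, a3]; exact ⟨n1, n2, n5⟩
    by_cases k2 : k = b
    · subst k2; rw [a4, a5, a6]; exact ⟨Ne.symm n6, n10, n7⟩
    exact g1 k (by omega) (by omega)
  · intro k hk hk'
    by_cases k1 : k = i
    · subst k1
      right
      rw [hE (k + 1) (by omega) (by omega), hE (k + 2) (by omega) (by omega),
        hM (k + 2) (by omega) (by omega), hE (k + 2 + 1) (by omega) (by omega)]
      exact g3 trivial
    by_cases k2 : k + 1 = b
    · subst k2
      left
      rw [hE (k + 1) (by omega) (by omega), hE (k + 2) (by omega) (by omega),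
        hM k (by omega) (by omega), hE k (by omega) (by omega)]
      exact g4
    rw [hE (k + 1) (by omega) (by omega), hE (k + 2) (by omega) (by omega),
        hM k (by omega) (by omega), hE k (by omega) (by omega),
        hM (k + 2) (by omega) (by omega), hE (k + 2 + 1) (by omega) (by omega)]
    exact g2 k (by omega) (by omega)
  · intro hF
    rw [hEi, hE (i + 1) (by omega) (by omega), hE (i + 1 + 1) (by omega) (by omega),
      hM (i + 1) (by omega) (by omega), a1, a2, a3]
    exact h4 hF
  · rw [hEj, Nat.add_sub_cancel, hE b (by omega) (by omega), hM b (by omega) (by omega),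
      hE (b + 1) (by omega) (by omega), a4, a5, a6]
    exact h6
  · intro a c ha hc hac
    have hac' := hD a c hac
    rw [hE a ha (by omega), hM a ha (by omega), hE (a + 1) (by omega) (by omega),
      hE c (by omega) (by omega), hM c (by omega) (by omega), hE (c + 1) (by omega) (by omega)]
    by_cases k1 : a = i + 1
    · subst k1
      obtain rfl := hl _ _ _ hac hb
      rw [a1, a2, a3, a4, a5, a6]
      exact ⟨rfl, n3, n4, n8, n9⟩
    by_cases k2 : c = b
    · subst k2
      exact absurd (hr _ _ _ hac hb) k1
    exact g5 a c (by omega) (by omega) hac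

theorem Col.cons_block {D : ℕ → ℕ → Prop} (hD : ∀ a b, D a b → a + 1 < b)
    (hl : ∀ a b c, D a b → D a c → b = c) (hr : ∀ a b c, D a c → D b c → a = b)
    (hcr : ∀ a b c d, D a b → D c d → ¬ (a < c ∧ c < b ∧ b < d))
    (hlr : ∀ a b c, D a b → ¬ D b c)
    {F : Prop} {i b j : ℕ} (hb : D (i + 1) b) (hbj : b + 1 < j)
    {p q e y m r : Fin 5} (x' m' y' r' : Fin 5) (hnd : [e, m', x', y', r'].Nodup)
    (h4 : F → p ≠ e ∧ p ≠ m' ∧ p ≠ x')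
    (h : Col D True (i + 1) b e m' x' y' m' r')
    (h' : Col D False b j y' m' r' y m r) : Col D F i j p q e y m r := by
  have hib := hD _ _ hb
  obtain ⟨E, M, a1, a2, a3, a4, a5, a6, g1, g2, g3, g4, g5⟩ := h
  obtain ⟨X, N, b1, b2, b3, b4, b5, b6, f1, f2, -, f4, f5⟩ := h'
  have hE : ∀ k, i < k → k ≤ b + 1 →
      (fun k => if k = i then p else if k ≤ b then E k else X k) k = E k := by
    intro k hk hk'; simp only; rw [if_neg (by omega)]
    split_ifs with h
    · rfl
    · obtain rfl : k = b + 1 := by omega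
      rw [a6, b3]
  have hM : ∀ k, i < k → k ≤ b → (fun k => if k = i then q else if k ≤ b then M k else N k) k = M k := by
    intro k hk hk'; simp only; rw [if_neg (by omega), if_pos hk']
  have hX : ∀ k, b ≤ k → (fun k => if k = i then p else if k ≤ b then E k else X k) k = X k := by
    intro k hk; simp only; rw [if_neg (by omega)]
    split_ifs with h
    · obtain rfl : k = b := by omega
      rw [a4, b1]
    · rfl
  have hN : ∀ k, b ≤ k → (fun k => if k = i then q else if k ≤ b then M k else N k) k = N k := by
    intro k hk; simp only; rw [if_neg (by omega)]
    split_ifs with h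
    · obtain rfl : k = b := by omega
      rw [a5, b2]
    · rfl
  have hEi : (fun k => if k = i then p else if k ≤ b then E k else X k) i = p := by simp
  have hMi : (fun k => if k = i then q else if k ≤ b then M k else N k) i = q := by simp
  refine ⟨fun k => if k = i then p else if k ≤ b then E k else X k,
    fun k => if k = i then q else if k ≤ b then M k else N k, ?_⟩
  revert hE hM hEi hMi hX hN
  generalize (fun k => if k = i then p else if k ≤ b then E k else X k) = E'
  generalize (fun k => if k = i then q else if k ≤ b then M k else N k) = M'
  intro hE hM hX hN hEi hMi
  simp only [List.nodup_cons, List.mem_cons, List.not_mem_nil, or_false, not_or] at hnd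
  obtain ⟨⟨n1, n2, n3, n4⟩, ⟨n5, n6, n7⟩, ⟨n8, n9⟩, n10, -⟩ := hnd
  unfold GoodOn NotAt at *
  refine ⟨hEi, hMi, by rw [hE _ (by omega) (by omega), a1],
    by rw [hX _ (by omega), b4], by rw [hN _ (by omega), b5], by rw [hX _ (by omega), b6],
    ?_, ?_, ?_, ?_, ?_⟩
  · intro k hk hk'
    by_cases kb : b < k
    · rw [hX k (by omega), hN k (by omega), hX (k + 1) (by omega)]
      exact f1 k kb hk'
    rw [hE k hk (by omega), hM k hk (by omega), hE (k + 1) (by omega) (by omega)]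
    by_cases k1 : k = i + 1
    · subst k1; rw [a1, a2, a3]; exact ⟨n1, n2, n5⟩
    by_cases k2 : k = b
    · subst k2; rw [a4, a5, a6]; exact ⟨Ne.symm n6, n10, n7⟩
    exact g1 k (by omega) (by omega)
  · intro k hk hk'
    by_cases kb : b ≤ k
    · rw [hX k (by omega), hN k (by omega), hX (k + 1) (by omega), hX (k + 2) (by omega),
        hN (k + 2) (by omega), hX (k + 2 + 1) (by omega)]
      exact f2 k kb hk'
    by_cases k1 : k = i
    · subst k1
      right
      rw [hE (k + 1) (by omega) (by omega), hE (k + 2) (by omega) (by omega),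
        hM (k + 2) (by omega) (by omega), hE (k + 2 + 1) (by omega) (by omega)]
      exact g3 trivial
    by_cases k2 : k + 1 = b
    · subst k2
      left
      rw [hE (k + 1) (by omega) (by omega), hE (k + 2) (by omega) (by omega),
        hM k (by omega) (by omega), hE k (by omega) (by omega)]
      exact g4
    rw [hE (k + 1) (by omega) (by omega), hE (k + 2) (by omega) (by omega),
        hM k (by omega) (by omega), hE k (by omega) (by omega),
        hM (k + 2) (by omega) (by omega), hE (k + 2 + 1) (by omega) (by omega)]
    exact g2 k (by omega) (by omega)
  · intro hF
    rw [hEi, hE (i + 1) (by omega) (by omega), hE (i + 1 + 1) (by omega) (by omega),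
      hM (i + 1) (by omega) (by omega), a1, a2, a3]
    exact h4 hF
  · rw [hX (j + 1) (by omega), hX (j - 1) (by omega), hN (j - 1) (by omega),
      hX (j - 1 + 1) (by omega)]
    exact f4
  · intro a c ha hc hac
    have hac' := hD a c hac
    by_cases kb : b < a
    · rw [hX a (by omega), hN a (by omega), hX (a + 1) (by omega), hX c (by omega),
        hN c (by omega), hX (c + 1) (by omega)]
      exact f5 a c kb hc hac
    have hab : a ≠ b := by rintro rfl; exact hlr _ _ _ hb hac
    have hcb : c ≤ b := by
      by_contra hcb
      by_cases k1 : a = i + 1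
      · subst k1
        exact hcb (hl _ _ _ hac hb).le
      · exact hcr _ _ _ _ hb hac ⟨by omega, by omega, by omega⟩
    rw [hE a ha (by omega), hM a ha (by omega), hE (a + 1) (by omega) (by omega),
      hE c (by omega) (by omega), hM c (by omega) (by omega), hE (c + 1) (by omega) (by omega)]
    by_cases k1 : a = i + 1
    · subst k1
      obtain rfl := hl _ _ _ hac hb
      rw [a1, a2, a3, a4, a5, a6]
      exact ⟨rfl, n3, n4, n8, n9⟩
    by_cases k2 : c = b
    · subst k2
      exact absurd (hr _ _ _ hac hb) k1
    exact g5 a c (by omega) (by omega) hac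

theorem Col.mono {D : ℕ → ℕ → Prop} {F F' : Prop} {i j : ℕ} {p q e y m r : Fin 5}
    (hF : F' → F) (h : Col D F i j p q e y m r) : Col D F' i j p q e y m r := by
  obtain ⟨E, M, a1, a2, a3, a4, a5, a6, g1, g2, g3, g4, g5⟩ := h
  exact ⟨E, M, a1, a2, a3, a4, a5, a6, g1, g2, fun h => g3 (hF h), g4, g5⟩

set_option synthInstance.maxSize 4000 in
set_option synthInstance.maxHeartbeats 400000 in
set_option maxRecDepth 20000 in
set_option maxHeartbeats 4000000 in
theorem search_dot_dot : ∀ y m r : Fin 5, y ≠ m → y ≠ r → m ≠ r → y ≠ 0 →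
    ∃ f t s : Fin 5, (0 ≠ t ∧ 0 ≠ f ∧ t ≠ f ∧ 1 ≠ t ∧ 1 ≠ f) ∧
      f ≠ s ∧ f ≠ y ∧ s ≠ y ∧ ((f = 1 ∨ f = 2) → (0 ≠ f ∧ 0 ≠ s ∧ 0 ≠ y)) ∧
      ((y ≠ 0 ∧ y ≠ t ∧ y ≠ f) ∨ (f ≠ y ∧ f ≠ m ∧ f ≠ r)) ∧
      (r ≠ f ∧ r ≠ s ∧ r ≠ y) := by decide

set_option synthInstance.maxSize 4000 in
set_option synthInstance.maxHeartbeats 400000 in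
set_option maxRecDepth 20000 in
set_option maxHeartbeats 4000000 in
theorem search_dot_block : ∀ y m r : Fin 5, y ≠ m → y ≠ r → m ≠ r → y ≠ 0 →
    ∃ f t : Fin 5, (0 ≠ t ∧ 0 ≠ f ∧ t ≠ f ∧ 1 ≠ t ∧ 1 ≠ f) ∧
      ∃ x' m' y' : Fin 5, [f, m', x', y', y].Nodup ∧
      ((f = 1 ∨ f = 2) → (0 ≠ f ∧ 0 ≠ m' ∧ 0 ≠ x')) ∧
      (r ≠ y' ∧ r ≠ m' ∧ r ≠ y) := by decide

set_option synthInstance.maxSize 4000 in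
set_option synthInstance.maxHeartbeats 400000 in
set_option maxRecDepth 20000 in
set_option maxHeartbeats 4000000 in
theorem search_block_dot : ∀ y m r : Fin 5, y ≠ m → y ≠ r → m ≠ r → y ≠ 0 →
    ∃ x' m' y' r' : Fin 5, [0, m', x', y', r'].Nodup ∧ (1 ≠ m' ∧ 1 ≠ x') ∧
      ∃ s : Fin 5, r' ≠ s ∧ r' ≠ y ∧ s ≠ y ∧
      ((y ≠ y' ∧ y ≠ m' ∧ y ≠ r') ∨ (r' ≠ y ∧ r' ≠ m ∧ r' ≠ r)) ∧
      (r ≠ r' ∧ r ≠ s ∧ r ≠ y) := by decide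

set_option synthInstance.maxSize 4000 in
set_option synthInstance.maxHeartbeats 400000 in
set_option maxRecDepth 20000 in
set_option maxHeartbeats 4000000 in
theorem search_block_block : ∀ y m r : Fin 5, y ≠ m → y ≠ r → m ≠ r → y ≠ 0 →
    ∃ x' m' y' r' : Fin 5, [0, m', x', y', r'].Nodup ∧ (1 ≠ m' ∧ 1 ≠ x') ∧
      ∃ x₂ m₂ y₂ : Fin 5, [r', m₂, x₂, y₂, y].Nodup ∧
      (r ≠ y₂ ∧ r ≠ m₂ ∧ r ≠ y) := by decide

theorem search_dot_long : ∀ y : Fin 5, 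
    ∃ f t : Fin 5, (0 ≠ t ∧ 0 ≠ f ∧ t ≠ f ∧ 1 ≠ t ∧ 1 ≠ f) ∧ y ≠ f := by decide

theorem search_block_long : ∀ y : Fin 5, 
    ∃ x' m' y' r' : Fin 5, [0, m', x', y', r'].Nodup ∧ (1 ≠ m' ∧ 1 ≠ x') ∧ y ≠ r' := by decide

/-- No chord leaves the open interval between `i` and `j`. -/
def Cl (D : ℕ → ℕ → Prop) (i j : ℕ) : Prop :=
  ∀ a b, D a b → ((i < a ∧ a < j) ↔ (i < b ∧ b < j))

def T1 (D : ℕ → ℕ → Prop) (i j : ℕ) : Prop :=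
  ∀ p m e y r, [p, m, e, y, r].Nodup → Col D True i j p m e y m r

def T2 (D : ℕ → ℕ → Prop) (i j : ℕ) : Prop :=
  ∀ p q e, p ≠ q → p ≠ e → q ≠ e → Col D True i j p q e p q e

def T3 (D : ℕ → ℕ → Prop) (i j : ℕ) : Prop :=
  ∀ p q e y m r, p ≠ q → p ≠ e → q ≠ e → y ≠ m → y ≠ r → m ≠ r → y ≠ e →
    Col D True i j p q e y m r

theorem T3_of {D : ℕ → ℕ → Prop} {i j : ℕ}
    (h : ∀ y m r, y ≠ m → y ≠ r → m ≠ r → y ≠ 0 → Col D True i j 1 2 0 y m r) : T3 D i j := by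
  intro p q e y m r h1 h2 h3 h4 h5 h6 h7
  obtain ⟨u, v, huv⟩ := exists_two e p q h2.symm h3.symm h1
  obtain ⟨σ, rfl, rfl, rfl, -, -⟩ := exists_perm e p q u v huv
  have := (h (σ.symm y) (σ.symm m) (σ.symm r) (by simpa) (by simpa) (by simpa)
    (by rwa [Ne, Equiv.symm_apply_eq])).perm σ
  simpa using this

theorem T2_of {D : ℕ → ℕ → Prop} {i j : ℕ} (h : Col D True i j 1 2 0 1 2 0) : T2 D i j := by
  intro p q e h1 h2 h3
  obtain ⟨u, v, huv⟩ := exists_two e p q h2.symm h3.symm h1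
  obtain ⟨σ, rfl, rfl, rfl, -, -⟩ := exists_perm e p q u v huv
  exact h.perm σ

theorem T1_of {D : ℕ → ℕ → Prop} {i j : ℕ} (h : Col D True i j 0 1 2 3 1 4) : T1 D i j := by
  intro p m e y r hn
  obtain ⟨σ, rfl, rfl, rfl, rfl, rfl⟩ := exists_perm p m e y r hn
  exact h.perm σ

theorem main_interval {D : ℕ → ℕ → Prop} (hD : ∀ a b, D a b → a + 1 < b)
    (hl : ∀ a b c, D a b → D a c → b = c) (hr : ∀ a b c, D a c → D b c → a = b)
    (hcr : ∀ a b c d, D a b → D c d → ¬ (a < c ∧ c < b ∧ b < d))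
    (hlr : ∀ a b c, D a b → ¬ D b c) :
    ∀ N i j : ℕ, j - i ≤ N → i + 1 < j → Cl D i j →
      T1 D i j ∧ (i + 2 < j → T2 D i j) ∧ (i + 2 < j → ¬ D (i + 1) (j - 1) → T3 D i j) := by
  intro N
  induction N with
  | zero => intro i j h1 h2; omega
  | succ N ih =>
    intro i j hN hij hcl
    -- the inside of a chord is closed
    have hin : ∀ a b, D a b → Cl D a b := by
      intro a b hab c d hcd
      have e1 := hcr _ _ _ _ hab hcd
      have e2 := hcr _ _ _ _ hcd hab
      have e3 := hD _ _ hab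
      have e4 := hD _ _ hcd
      have e5 : c ≠ b := by rintro rfl; exact hlr _ _ _ hab hcd
      have e6 : d ≠ a := by rintro rfl; exact hlr _ _ _ hcd hab
      have e7 : c = a → d = b := by rintro rfl; exact hl _ _ _ hcd hab
      have e8 : d = b → c = a := by rintro rfl; exact hr _ _ _ hcd hab
      omega
    have hchord : ∀ b, D (i + 1) b → b < j ∧ T1 D (i + 1) b := by
      intro b hb
      have h1 := hcl _ _ hb
      have h2 := hD _ _ hb
      have h3 : b < j := by omega
      exact ⟨h3, (ih (i + 1) b (by omega) h2 (hin _ _ hb)).1⟩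
    have hT3 : i + 2 < j → ¬ D (i + 1) (j - 1) → T3 D i j := by
      intro hij2 hns
      apply T3_of
      intro y m r h1 h2 h3 h4
      by_cases hex : ∃ b, D (i + 1) b
      · obtain ⟨b, hb⟩ := hex
        obtain ⟨hbj, hT⟩ := hchord b hb
        have hib := hD _ _ hb
        have hbj1 : b + 1 < j := by
          by_contra hh
          obtain rfl : b = j - 1 := by omega
          exact hns hb
        have hclb : Cl D b j := by
          intro c d hcd
          have e0 := hcl _ _ hcd
          have e1 := hcr _ _ _ _ hb hcd
          have e2 := hcr _ _ _ _ hcd hb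
          have e4 := hD _ _ hcd
          have e5 : c ≠ b := by rintro rfl; exact hlr _ _ _ hb hcd
          have e7 : c = i + 1 → d = b := by rintro rfl; exact hl _ _ _ hcd hb
          omega
        have hT' : ∀ e m' x' y' r', [e, m', x', y', r'].Nodup →
            Col D True (i + 1) b e m' x' y' m' r' := hT
        obtain ⟨-, -, ih3⟩ := ih b j (by omega) hbj1 hclb
        by_cases hs1 : j = b + 2
        · subst hs1
          obtain ⟨x', m', y', r', c1, ⟨c2, c3⟩, s, c4, c5, c6, c7, c8⟩ :=
            search_block_dot y m r h1 h2 h3 h4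
          exact Col.cons_block hD hl hr hcr hlr hb hbj1 x' m' y' r' c1
            (fun _ => ⟨by decide, c2, c3⟩) (hT' _ _ _ _ _ c1)
            (Col.single_dot hD s c4 c5 c6 (fun h => h.elim) c7 c8)
        by_cases hs2 : D (b + 1) (j - 1)
        · obtain ⟨x', m', y', r', c1, ⟨c2, c3⟩, x₂, m₂, y₂, c4, c5⟩ :=
            search_block_block y m r h1 h2 h3 h4
          have hD2 := hD _ _ hs2
          have hT2 := (ih (b + 1) (j - 1) (by omega) hD2 (hin _ _ hs2)).1
          refine Col.cons_block hD hl hr hcr hlr hb hbj1 x' m' y' r' c1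
            (fun _ => ⟨by decide, c2, c3⟩) (hT' _ _ _ _ _ c1) ?_
          have := Col.single_block (F := False) (p := y') (q := m') (m := m) (r := r) hD hl hr hs2
            x₂ m₂ y₂ c4 (fun h => h.elim) c5 (hT2 _ _ _ _ _ c4)
          rwa [show j - 1 + 1 = j by omega] at this
        · obtain ⟨x', m', y', r', c1, ⟨c2, c3⟩, c4⟩ := search_block_long y
          refine Col.cons_block hD hl hr hcr hlr hb hbj1 x' m' y' r' c1
            (fun _ => ⟨by decide, c2, c3⟩) (hT' _ _ _ _ _ c1) ?_
          simp only [List.nodup_cons, List.mem_cons, List.not_mem_nil, or_false, not_or] at c1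
          obtain ⟨⟨n1, n2, n3, n4⟩, ⟨n5, n6, n7⟩, ⟨n8, n9⟩, n10, -⟩ := c1
          exact (ih3 (by omega) hs2 y' m' r' y m r (Ne.symm n6) n10 n7 h1 h2 h3 c4).mono
            (fun _ => trivial)
      · have hd : ∀ b, ¬ D (i + 1) b := fun b hb => hex ⟨b, hb⟩
        have hclb : Cl D (i + 1) j := by
          intro c d hcd
          have e0 := hcl _ _ hcd
          have e4 := hD _ _ hcd
          have e5 : c ≠ i + 1 := by rintro rfl; exact hd _ hcd
          omega
        obtain ⟨-, -, ih3⟩ := ih (i + 1) j (by omega) hij2 hclb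
        by_cases hs1 : j = i + 1 + 2
        · subst hs1
          obtain ⟨f, t, s, ⟨c1, c2, c3, c4, c5⟩, c6, c7, c8, c9, c10, c11⟩ :=
            search_dot_dot y m r h1 h2 h3 h4
          exact Col.cons_dot hD hij2 hd f t c1 c2 c3 (fun _ => ⟨by decide, c4, c5⟩)
            (Col.single_dot hD s c6 c7 c8 c9 c10 c11)
        by_cases hs2 : D (i + 1 + 1) (j - 1)
        · obtain ⟨f, t, ⟨c1, c2, c3, c4, c5⟩, x', m', y', c6, c7, c8⟩ :=
            search_dot_block y m r h1 h2 h3 h4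
          have hD2 := hD _ _ hs2
          have hT2 := (ih (i + 1 + 1) (j - 1) (by omega) hD2 (hin _ _ hs2)).1
          refine Col.cons_dot hD hij2 hd f t c1 c2 c3 (fun _ => ⟨by decide, c4, c5⟩) ?_
          have := Col.single_block (F := f = 1 ∨ f = 2) (p := 0) (q := t) (m := m) (r := r)
            hD hl hr hs2 x' m' y' c6 c7 c8 (hT2 _ _ _ _ _ c6)
          rwa [show j - 1 + 1 = j by omega] at this
        · obtain ⟨f, t, ⟨c1, c2, c3, c4, c5⟩, c6⟩ := search_dot_long y
          refine Col.cons_dot hD hij2 hd f t c1 c2 c3 (fun _ => ⟨by decide, c4, c5⟩) ?_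
          exact (ih3 (by omega) hs2 0 t f y m r c1 c2 c3 h1 h2 h3 c6).mono (fun _ => trivial)
    by_cases hs1 : j = i + 2
    · subst hs1
      refine ⟨T1_of ?_, fun h => absurd h (lt_irrefl _), hT3⟩
      exact Col.single_dot hD 1 (by decide) (by decide) (by decide) (fun _ => by decide)
        (by decide) (by decide)
    by_cases hs2 : D (i + 1) (j - 1)
    · have hD2 := hD _ _ hs2
      obtain ⟨-, hT⟩ := hchord _ hs2
      refine ⟨T1_of ?_, fun _ => T2_of ?_, hT3⟩
      · have := Col.single_block (F := True) (p := 0) (q := 1) (m := 1) (r := 4) (e := 2) (y := 3)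
          hD hl hr hs2 4 1 0 (by decide) (fun _ => by decide) (by decide)
          (hT _ _ _ _ _ (by decide))
        rwa [show j - 1 + 1 = j by omega] at this
      · have := Col.single_block (F := True) (p := 1) (q := 2) (m := 2) (r := 0) (e := 0) (y := 1)
          hD hl hr hs2 4 2 3 (by decide) (fun _ => by decide) (by decide)
          (hT _ _ _ _ _ (by decide))
        rwa [show j - 1 + 1 = j by omega] at this
    · have h3 := hT3 (by omega) hs2
      refine ⟨?_, fun _ => ?_, hT3⟩
      · apply T1_of
        exact h3 _ _ _ _ _ _ (by decide) (by decide) (by decide) (by decide) (by decide)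
          (by decide) (by decide)
      · intro p q e h1 h2 h3'
        exact h3 _ _ _ _ _ _ h1 h2 h3' h1 h2 h3' h2

/-- `j` is the cyclic successor of `i`. -/
def NX (n i j : ℕ) : Prop := j = i + 1 ∧ j < n ∨ i + 1 = n ∧ j = 0

theorem main_cycle {D : ℕ → ℕ → Prop} (hD : ∀ a b, D a b → a + 1 < b)
    (hl : ∀ a b c, D a b → D a c → b = c) (hr : ∀ a b c, D a c → D b c → a = b)
    (hcr : ∀ a b c d, D a b → D c d → ¬ (a < c ∧ c < b ∧ b < d))
    (hlr : ∀ a b c, D a b → ¬ D b c) (n : ℕ) (hn : 3 ≤ n) (hDn : ∀ a b, D a b → b < n)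
    (h0n : ¬ D 0 (n - 1)) :
    ∃ E M : ℕ → Fin 5, E n = E 0 ∧
      (∀ k, k < n → E k ≠ M k ∧ E k ≠ E (k + 1) ∧ M k ≠ E (k + 1)) ∧
      (∀ i j k, NX n i j → NX n j k → NotAt E M (E (j + 1)) i ∨ NotAt E M (E j) k) ∧
      (∀ a b, D a b → M a = M b ∧ E a ≠ E b ∧ E a ≠ E (b + 1) ∧
        E (a + 1) ≠ E b ∧ E (a + 1) ≠ E (b + 1)) := by
  by_cases hex : ∃ b, D 0 b
  · obtain ⟨b, hb⟩ := hex
    have hb2 := hD _ _ hb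
    have hbn := hDn _ _ hb
    have hbn1 : b + 1 < n := by
      by_contra hh
      obtain rfl : b = n - 1 := by omega
      exact h0n hb
    have hc1 : Cl D 0 b := by
      intro c d hcd
      have e1 := hcr _ _ _ _ hb hcd
      have e3 := hD _ _ hcd
      have e5 : c ≠ b := by rintro rfl; exact hlr _ _ _ hb hcd
      have e7 : c = 0 → d = b := by rintro rfl; exact hl _ _ _ hcd hb
      have e8 : d = b → c = 0 := by rintro rfl; exact hr _ _ _ hcd hb
      omega
    have hc2 : Cl D b n := by
      intro c d hcd
      have e1 := hcr _ _ _ _ hb hcd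
      have e3 := hD _ _ hcd
      have e4 := hDn _ _ hcd
      have e5 : c ≠ b := by rintro rfl; exact hlr _ _ _ hb hcd
      have e7 : c = 0 → d = b := by rintro rfl; exact hl _ _ _ hcd hb
      omega
    obtain ⟨E, M, a1, a2, a3, a4, a5, a6, g1, g2, g3, g4, g5⟩ :=
      (main_interval hD hl hr hcr hlr _ 0 b le_rfl hb2 hc1).1 0 1 2 3 4 (by decide)
    obtain ⟨X, N, b1, b2, b3, b4, b5, b6, f1, f2, f3, f4, f5⟩ :=
      (main_interval hD hl hr hcr hlr _ b n le_rfl hbn1 hc2).1 3 1 4 0 2 (by decide)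
    have hE : ∀ k, k ≤ b + 1 → (fun k => if k ≤ b then E k else X k) k = E k := by
      intro k hk'; simp only
      split_ifs with h
      · rfl
      · obtain rfl : k = b + 1 := by omega
        rw [a6, b3]
    have hM : ∀ k, k ≤ b → (fun k => if k ≤ b then M k else N k) k = M k := by
      intro k hk'; simp only; rw [if_pos hk']
    have hX : ∀ k, b ≤ k → (fun k => if k ≤ b then E k else X k) k = X k := by
      intro k hk; simp only
      split_ifs with h
      · obtain rfl : k = b := by omega
        rw [a4, b1]
      · rfl
    have hN : ∀ k, b ≤ k → (fun k => if k ≤ b then M k else N k) k = N k := by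
      intro k hk; simp only
      split_ifs with h
      · obtain rfl : k = b := by omega
        rw [a5, b2]
      · rfl
    refine ⟨fun k => if k ≤ b then E k else X k, fun k => if k ≤ b then M k else N k, ?_⟩
    revert hE hM hX hN
    generalize (fun k => if k ≤ b then E k else X k) = E'
    generalize (fun k => if k ≤ b then M k else N k) = M'
    intro hE hM hX hN
    unfold NotAt at *
    refine ⟨by rw [hX n (by omega), hE 0 (by omega), b4, a1], ?_, ?_, ?_⟩
    · intro k hk
      by_cases k1 : b < k
      · rw [hX k (by omega), hN k (by omega), hX (k + 1) (by omega)]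
        exact f1 k k1 hk
      rw [hE k (by omega), hM k (by omega), hE (k + 1) (by omega)]
      by_cases k2 : k = 0
      · subst k2; rw [a1, a2, a3]; decide
      by_cases k3 : k = b
      · subst k3; rw [a4, a5, a6]; decide
      exact g1 k (by omega) (by omega)
    · intro i j k hij hjk
      rcases hjk with ⟨rfl, hkn⟩ | ⟨hjn, rfl⟩
      · rcases hij with ⟨rfl, hjn⟩ | ⟨hjn, rfl⟩
        · by_cases k1 : b ≤ i
          · rw [hX i (by omega), hN i (by omega), hX (i + 1) (by omega), hX (i + 1 + 1) (by omega),
              hN (i + 1 + 1) (by omega), hX (i + 1 + 1 + 1) (by omega)]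
            exact f2 i k1 hjn
          by_cases k2 : i + 1 = b
          · subst k2
            left
            rw [hE i (by omega), hM i (by omega), hE (i + 1) (by omega), hE (i + 1 + 1) (by omega)]
            exact g4
          rw [hE i (by omega), hM i (by omega), hE (i + 1) (by omega), hE (i + 1 + 1) (by omega),
              hM (i + 1 + 1) (by omega), hE (i + 1 + 1 + 1) (by omega)]
          exact g2 i (by omega) (by omega)
        · right
          rw [hE 0 (by omega), hE (0 + 1) (by omega), hM (0 + 1) (by omega),
            hE (0 + 1 + 1) (by omega)]
          exact g3 trivial
      · rcases hij with ⟨rfl, hjn'⟩ | ⟨hjn', rfl⟩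
        · rw [hX i (by omega), hN i (by omega), hX (i + 1) (by omega), hX (i + 1 + 1) (by omega),
            hE 0 (by omega), hM 0 (by omega), hE (0 + 1) (by omega)]
          have := f2 i (by omega) (by omega)
          rw [show i + 2 = n by omega, b4, b5, b6] at this
          rw [show i + 1 + 1 = n by omega, a1, a2, a3, b4]
          exact this
        · omega
    · intro a c hac
      have hac' := hD a c hac
      have hcn := hDn a c hac
      have hab : a ≠ b := by rintro rfl; exact hlr _ _ _ hb hac
      by_cases k1 : b < a
      · rw [hX a (by omega), hN a (by omega), hX (a + 1) (by omega), hX c (by omega),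
          hN c (by omega), hX (c + 1) (by omega)]
        exact f5 a c k1 hcn hac
      have e1 := hcr _ _ _ _ hb hac
      have e7 : a = 0 → c = b := by rintro rfl; exact hl _ _ _ hac hb
      have e8 : c = b → a = 0 := by rintro rfl; exact hr _ _ _ hac hb
      rw [hE a (by omega), hM a (by omega), hE (a + 1) (by omega), hE c (by omega),
          hM c (by omega), hE (c + 1) (by omega)]
      by_cases k2 : a = 0
      · subst k2
        obtain rfl := e7 rfl
        rw [a1, a2, a3, a4, a5, a6]; decide
      exact g5 a c (by omega) (by omega) hac
  · have hne : ∀ a b, D a b → a ≠ 0 := by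
      rintro a b hab rfl; exact hex ⟨b, hab⟩
    have hcl : Cl D 0 n := by
      intro a b hab
      have := hne _ _ hab
      have := hD _ _ hab
      have := hDn _ _ hab
      omega
    obtain ⟨E, M, a1, a2, a3, a4, a5, a6, g1, g2, g3, g4, g5⟩ :=
      (main_interval hD hl hr hcr hlr _ 0 n le_rfl (by omega) hcl).2.1 (by omega) 1 2 0
        (by decide) (by decide) (by decide)
    refine ⟨E, M, by rw [a4, a1], ?_, ?_, ?_⟩
    · intro k hk
      by_cases k0 : k = 0
      · subst k0; rw [a1, a2, a3]; decide
      exact g1 k (by omega) hk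
    · intro i j k hij hjk
      rcases hij with ⟨rfl, hjn⟩ | ⟨hjn, rfl⟩
      · rcases hjk with ⟨rfl, hkn⟩ | ⟨hjn, rfl⟩
        · exact g2 i (by omega) hjn
        · have := g2 i (by omega) (by omega)
          rcases this with h | h
          · exact Or.inl h
          · right
            unfold NotAt at *
            rw [show i + 2 = n by omega, a4, a5, a6] at h
            rw [a1, a2, a3]
            exact h
      · have : k = 1 := by unfold NX at hjk; omega
        subst this
        exact Or.inr (g3 trivial)
    · intro a b hab
      exact g5 a b (by have := hne _ _ hab; omega) (hDn _ _ hab) hab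

theorem star_of {V : Type*} (G : SimpleGraph V) (f : V → V → Fin 5) (S : V → Fin 5 → Prop)
    (hf : ∀ u v, G.Adj u v → f u v = f v u)
    (hS : ∀ u v, G.Adj u v → S u (f u v))
    (hp : ∀ u v w, G.Adj u v → G.Adj u w → v ≠ w → f u v ≠ f u w)
    (h : ∀ u v w, G.Adj v u → G.Adj v w → u ≠ w → ¬ (S u (f v w) ∧ S w (f v u))) :
    ∃ c : Sym2 V → Fin 5, IsStarEdgeColoring G c := by
  have hc : ∀ u v, G.Adj u v → (fun s : Sym2 V => f (Quot.out s).1 (Quot.out s).2) s(u, v) = f u v := by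
    intro u v huv
    have h1 : s((Quot.out s(u, v)).1, (Quot.out s(u, v)).2) = s(u, v) := Quot.out_eq _
    rcases Sym2.eq_iff.1 h1 with ⟨h2, h3⟩ | ⟨h2, h3⟩
    · simp only [h2, h3]
    · simp only [h2, h3]; exact (hf _ _ huv).symm
  refine ⟨fun s : Sym2 V => f (Quot.out s).1 (Quot.out s).2, ?_⟩
  revert hc
  generalize (fun s : Sym2 V => f (Quot.out s).1 (Quot.out s).2) = c
  intro hc
  constructor
  · intro u v w huv huw hvw
    rw [hc _ _ huv, hc _ _ huw]
    exact hp _ _ _ huv huw hvw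
  · intro v₀ v₁ v₂ v₃ v₄ h01 h12 h23 h34 hd
    have d : v₀ ≠ v₂ ∧ v₁ ≠ v₃ ∧ v₂ ≠ v₄ := by
      rcases hd with hd | ⟨rfl, hd⟩
      · simp at hd; tauto
      · simp at hd
        exact ⟨hd.1.2.1, hd.2.1.2, fun h => hd.1.2.1 h.symm⟩
    rw [hc _ _ h01, hc _ _ h12, hc _ _ h23, hc _ _ h34]
    have n1 : f v₀ v₁ ≠ f v₁ v₂ := by
      rw [hf _ _ h01]; exact hp _ _ _ h01.symm h12 d.1
    have n2 : f v₁ v₂ ≠ f v₂ v₃ := by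
      rw [hf _ _ h12]; exact hp _ _ _ h12.symm h23 d.2.1
    have n3 : f v₂ v₃ ≠ f v₃ v₄ := by
      rw [hf _ _ h23]; exact hp _ _ _ h23.symm h34 d.2.2
    have key := h v₁ v₂ v₃ h12.symm h23 d.2.1
    by_cases e1 : f v₀ v₁ = f v₂ v₃
    · by_cases e2 : f v₁ v₂ = f v₃ v₄
      · exfalso
        apply key
        constructor
        · rw [← e1, hf _ _ h01]; exact hS _ _ h01.symm
        · rw [← hf _ _ h12, e2]; exact hS _ _ h34
      · have : ({f v₁ v₂, f v₂ v₃, f v₃ v₄} : Finset (Fin 5)).card = 3 :=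
          Finset.card_eq_three.2 ⟨_, _, _, n2, e2, n3, rfl⟩
        rw [← this]
        apply Finset.card_le_card
        intro z; simp only [Finset.mem_insert, Finset.mem_singleton]; tauto
    · have : ({f v₀ v₁, f v₁ v₂, f v₂ v₃} : Finset (Fin 5)).card = 3 :=
        Finset.card_eq_three.2 ⟨_, _, _, n1, e1, n2, rfl⟩
      rw [← this]
      apply Finset.card_le_card
      intro z; simp only [Finset.mem_insert, Finset.mem_singleton]; tauto

/-- Colors of ordered pairs of vertices. -/
def colF (n : ℕ) (P : Fin n → Prop) (E M : ℕ → Fin 5) :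
    (Fin n ⊕ {i : Fin n // P i}) → (Fin n ⊕ {i : Fin n // P i}) → Fin 5
  | Sum.inl i, Sum.inl j =>
      if i.val + 1 = j.val ∨ (i.val + 1 = n ∧ j.val = 0) then E (i.val + 1)
      else if j.val + 1 = i.val ∨ (j.val + 1 = n ∧ i.val = 0) then E (j.val + 1)
      else M i.val
  | Sum.inl _, Sum.inr j => M j.1.val
  | Sum.inr j, Sum.inl _ => M j.1.val
  | Sum.inr _, Sum.inr _ => 0

theorem starChromaticIndex_cycleChordPendant_le
    (n : ℕ) [NeZero n] (hn : 3 ≤ n) (D : Set (Fin n × Fin n)) (P : Fin n → Prop)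
    (hchord : ∀ p ∈ D, p.1.val + 1 < p.2.val ∧ ¬(p.1.val = 0 ∧ p.2.val = n - 1))
    (hnoncross : ∀ p ∈ D, ∀ q ∈ D,
      ¬(p.1.val < q.1.val ∧ q.1.val < p.2.val ∧ p.2.val < q.2.val) ∧
      ¬(q.1.val < p.1.val ∧ p.1.val < q.2.val ∧ q.2.val < p.2.val))
    (hdeg : ∀ x, ((cycleChordPendant n D P).neighborSet x).ncard ≤ 3) :
    starChromaticIndex (cycleChordPendant n D P) ≤ 5 := by
  apply Nat.sInf_le
  show ∃ c : Sym2 _ → Fin 5, IsStarEdgeColoring (cycleChordPendant n D P) c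
  -- successor in Fin n
  have hsucc : ∀ i : Fin n, NX n i.val (i + 1).val := by
    intro i
    have h1 : (i + 1).val = (i.val + 1) % n := by
      rw [Fin.val_add, Fin.val_one', Nat.add_mod_mod]
    have hi := i.isLt
    unfold NX
    rcases Nat.lt_or_ge (i.val + 1) n with h | h
    · left; rw [h1, Nat.mod_eq_of_lt h]; exact ⟨rfl, h⟩
    · right
      have : i.val + 1 = n := by omega
      exact ⟨this, by rw [h1, this, Nat.mod_self]⟩
  have hsucc' : ∀ i j : Fin n, NX n i.val j.val → j = i + 1 := by
    intro i j h
    have := hsucc i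
    unfold NX at *
    apply Fin.ext
    omega
  have hNXn : ∀ i : Fin n, ∃ j : Fin n, NX n j.val i.val := by
    intro i
    refine ⟨i - 1, ?_⟩
    have := hsucc (i - 1)
    rwa [sub_add_cancel] at this
  let third : Fin n → (Fin n ⊕ {i : Fin n // P i}) → Prop := fun i u =>
    (∃ j : Fin n, u = Sum.inl j ∧ ((i, j) ∈ D ∨ (j, i) ∈ D)) ∨
    (∃ j : {i : Fin n // P i}, u = Sum.inr j ∧ j.1 = i)
  -- classification of the neighbours
  have hadj : ∀ i u, (cycleChordPendant n D P).Adj (Sum.inl i) u ↔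
      (∃ j : Fin n, u = Sum.inl j ∧ NX n i.val j.val) ∨
      (∃ j : Fin n, u = Sum.inl j ∧ NX n j.val i.val) ∨ third i u := by
    intro i u
    simp only [cycleChordPendant, SimpleGraph.fromRel_adj, third]
    constructor
    · rintro ⟨-, (⟨k, hk, rfl⟩ | ⟨p, hp, hk, rfl⟩ | ⟨k, hk, rfl⟩) |
        (⟨k, rfl, hk⟩ | ⟨p, hp, rfl, hk⟩ | ⟨k, rfl, hk⟩)⟩
      · cases hk; exact Or.inl ⟨_, rfl, hsucc _⟩
      · cases hk; exact Or.inr (Or.inr (Or.inl ⟨_, rfl, Or.inl hp⟩))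
      · cases hk; exact Or.inr (Or.inr (Or.inr ⟨_, rfl, rfl⟩))
      · cases hk; exact Or.inr (Or.inl ⟨_, rfl, hsucc _⟩)
      · cases hk; exact Or.inr (Or.inr (Or.inl ⟨_, rfl, Or.inr hp⟩))
      · cases hk
    · rintro (⟨j, rfl, hj⟩ | ⟨j, rfl, hj⟩ | ⟨j, rfl, hj | hj⟩ | ⟨j, rfl, rfl⟩)
      · refine ⟨?_, Or.inl (Or.inl ⟨i, rfl, by rw [hsucc' _ _ hj]⟩)⟩
        intro h; cases h; unfold NX at hj; omega
      · refine ⟨?_, Or.inr (Or.inl ⟨j, rfl, by rw [hsucc' _ _ hj]⟩)⟩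
        intro h; cases h; unfold NX at hj; omega
      · refine ⟨?_, Or.inl (Or.inr (Or.inl ⟨_, hj, rfl, rfl⟩))⟩
        intro h; cases h; have := hchord _ hj; simp at this
      · refine ⟨?_, Or.inr (Or.inr (Or.inl ⟨_, hj, rfl, rfl⟩))⟩
        intro h; cases h; have := hchord _ hj; simp at this
      · refine ⟨by simp, Or.inl (Or.inr (Or.inr ⟨j, rfl, rfl⟩))⟩
  have hadjr : ∀ j u, (cycleChordPendant n D P).Adj (Sum.inr j) u → u = Sum.inl j.1 := by
    intro j u
    simp only [cycleChordPendant, SimpleGraph.fromRel_adj]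
    rintro ⟨-, (⟨k, hk, rfl⟩ | ⟨p, hp, hk, rfl⟩ | ⟨k, hk, rfl⟩) |
        (⟨k, rfl, hk⟩ | ⟨p, hp, rfl, hk⟩ | ⟨k, rfl, hk⟩)⟩ <;> cases hk
    rfl
  -- chords do not join consecutive vertices
  have hth : ∀ i j : Fin n, third i (Sum.inl j) → ¬ NX n i.val j.val ∧ ¬ NX n j.val i.val := by
    intro i j h
    have hi := i.isLt
    have hj := j.isLt
    rcases h with ⟨k, hk, h | h⟩ | ⟨k, hk, h⟩
    · cases hk; have := hchord _ h; unfold NX; simp only at this; omega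
    · cases hk; have := hchord _ h; unfold NX; simp only at this; omega
    · cases hk
  have huniq : ∀ i u w, third i u → third i w → u = w := by
    intro i u w hu hw
    by_contra huw
    obtain ⟨j, hj⟩ := hNXn i
    have hsub : ({Sum.inl (i + 1), Sum.inl j, u, w} : Set (Fin n ⊕ {i : Fin n // P i})) ⊆
        (cycleChordPendant n D P).neighborSet (Sum.inl i) := by
      intro z hz
      rw [SimpleGraph.mem_neighborSet, hadj]
      rcases hz with rfl | rfl | rfl | rfl
      · exact Or.inl ⟨_, rfl, hsucc i⟩
      · exact Or.inr (Or.inl ⟨_, rfl, hj⟩)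
      · exact Or.inr (Or.inr hu)
      · exact Or.inr (Or.inr hw)
    have hle := (Set.ncard_le_ncard hsub (Set.toFinite _)).trans (hdeg (Sum.inl i))
    have hs := hsucc i
    have n1 : (Sum.inl (i + 1) : Fin n ⊕ {i : Fin n // P i}) ≠ Sum.inl j := by
      intro h
      cases h
      unfold NX at *
      omega
    have nx : ∀ z, third i z → (Sum.inl (i + 1) : Fin n ⊕ {i : Fin n // P i}) ≠ z := by
      rintro z hz rfl
      exact (hth _ _ hz).1 hs
    have px : ∀ z, third i z → (Sum.inl j : Fin n ⊕ {i : Fin n // P i}) ≠ z := by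
      rintro z hz rfl
      exact (hth _ _ hz).2 hj
    have hcard : ({Sum.inl (i + 1), Sum.inl j, u, w} :
        Set (Fin n ⊕ {i : Fin n // P i})).ncard = 4 := by
      rw [Set.ncard_insert_of_notMem, Set.ncard_insert_of_notMem, Set.ncard_pair huw]
      · simp only [Set.mem_insert_iff, Set.mem_singleton_iff, not_or]
        exact ⟨px _ hu, px _ hw⟩
      · simp only [Set.mem_insert_iff, Set.mem_singleton_iff, not_or]
        exact ⟨n1, nx _ hu, nx _ hw⟩
    omega
  let D' : ℕ → ℕ → Prop := fun a b => ∃ i j : Fin n, (i, j) ∈ D ∧ i.val = a ∧ j.val = b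
  have hD' : ∀ a b, D' a b → a + 1 < b := by
    rintro a b ⟨i, j, h, rfl, rfl⟩; exact (hchord _ h).1
  obtain ⟨E, M, hE0, hprop, hV, hch⟩ := main_cycle (D := D') hD'
    (by
      rintro a b c ⟨i, j, h, rfl, rfl⟩ ⟨i', j', h', hi, rfl⟩
      obtain rfl := Fin.ext hi
      have := huniq _ _ _ (Or.inl ⟨j, rfl, Or.inl h⟩) (Or.inl ⟨j', rfl, Or.inl h'⟩)
      cases this; rfl)
    (by
      rintro a b c ⟨i, j, h, rfl, rfl⟩ ⟨i', j', h', rfl, hi⟩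
      obtain rfl := Fin.ext hi
      have := huniq _ _ _ (Or.inl ⟨i, rfl, Or.inr h⟩) (Or.inl ⟨i', rfl, Or.inr h'⟩)
      cases this; rfl)
    (by
      rintro a b c d ⟨i, j, h, rfl, rfl⟩ ⟨i', j', h', rfl, rfl⟩
      exact (hnoncross _ h _ h').1)
    (by
      rintro a b c ⟨i, j, h, rfl, rfl⟩ ⟨i', j', h', hi, rfl⟩
      obtain rfl := Fin.ext hi
      have := huniq _ _ _ (Or.inl ⟨i, rfl, Or.inr h⟩) (Or.inl ⟨j', rfl, Or.inl h'⟩)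
      cases this
      have e1 := hchord _ h
      have e2 := hchord _ h'
      simp only at e1 e2
      omega)
    n hn
    (by rintro a b ⟨i, j, h, rfl, rfl⟩; exact j.isLt)
    (by rintro ⟨i, j, h, h1, h2⟩; exact (hchord _ h).2 ⟨h1, h2⟩)
  -- colors of the three kinds of edges
  have cn : ∀ i j : Fin n, NX n i.val j.val →
      colF n P E M (Sum.inl i) (Sum.inl j) = E (i.val + 1) := by
    intro i j h
    simp only [colF]
    rw [if_pos (by unfold NX at h; omega)]
  have hEs : ∀ i j : Fin n, NX n i.val j.val → E (i.val + 1) = E j.val := by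
    rintro i j (⟨h, -⟩ | ⟨h, h'⟩)
    · rw [h]
    · rw [h, h', hE0]
  have cp : ∀ i j : Fin n, NX n j.val i.val →
      colF n P E M (Sum.inl i) (Sum.inl j) = E i.val := by
    intro i j h
    rw [← hEs _ _ h]
    simp only [colF]
    rw [if_neg (by unfold NX at h; omega), if_pos (by unfold NX at h; omega)]
  have ct : ∀ i u, third i u → colF n P E M (Sum.inl i) u = M i.val := by
    intro i u h
    rcases u with j | j
    · have := hth _ _ h
      have hj := j.isLt
      have hi := i.isLt
      simp only [colF]
      rw [if_neg (by unfold NX at this; omega), if_neg (by unfold NX at this; omega)]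
    · rcases h with ⟨k, hk, -⟩ | ⟨k, hk, rfl⟩
      · cases hk
      · cases hk; rfl
  have hchM : ∀ i j : Fin n, ((i, j) ∈ D ∨ (j, i) ∈ D) → M i.val = M j.val ∧ E i.val ≠ E j.val ∧
      E i.val ≠ E (j.val + 1) ∧ E (i.val + 1) ≠ E j.val ∧ E (i.val + 1) ≠ E (j.val + 1) := by
    rintro i j (h | h)
    · exact hch _ _ ⟨i, j, h, rfl, rfl⟩
    · have := hch _ _ ⟨j, i, h, rfl, rfl⟩
      exact ⟨this.1.symm, this.2.1.symm, this.2.2.2.1.symm, this.2.2.1.symm, this.2.2.2.2.symm⟩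
  let S : (Fin n ⊕ {i : Fin n // P i}) → Fin 5 → Prop := fun u c =>
    match u with
    | Sum.inl i => ¬ NotAt E M c i.val
    | Sum.inr j => c = M j.1.val
  -- third neighbours are harmless
  have hS3 : ∀ i u, third i u → ¬ S u (E i.val) ∧ ¬ S u (E (i.val + 1)) := by
    intro i u h
    have hp := hprop i.val i.isLt
    rcases h with ⟨j, rfl, h⟩ | ⟨j, rfl, rfl⟩
    · have hm := hchM _ _ h
      simp only [S, not_not, NotAt]
      rw [← hm.1]
      exact ⟨⟨hm.2.1, hp.1, hm.2.2.1⟩, ⟨hm.2.2.2.1, hp.2.2.symm, hm.2.2.2.2⟩⟩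
    · exact ⟨hp.1, hp.2.2.symm⟩
  have hsymm : ∀ i u, (cycleChordPendant n D P).Adj (Sum.inl i) u →
      colF n P E M (Sum.inl i) u = colF n P E M u (Sum.inl i) := by
    intro i u hiu
    rcases (hadj _ _).1 hiu with ⟨j, rfl, h⟩ | ⟨j, rfl, h⟩ | h
    · rw [cn _ _ h, cp _ _ h, hEs _ _ h]
    · rw [cn _ _ h, cp _ _ h, hEs _ _ h]
    · rw [ct _ _ h]
      rcases h with ⟨j, rfl, h⟩ | ⟨j, rfl, rfl⟩
      · rw [ct _ _ (Or.inl ⟨i, rfl, h.symm⟩)]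
        exact (hchM _ _ h).1
      · rfl
  apply star_of _ (colF n P E M) S
  · rintro (i | i) v h
    · exact hsymm _ _ h
    · have := hadjr _ _ h
      subst this
      exact (hsymm _ _ h.symm).symm
  · rintro (i | i) v hiv
    · show ¬ NotAt E M _ i.val
      unfold NotAt
      rcases (hadj _ _).1 hiv with ⟨j, rfl, h⟩ | ⟨j, rfl, h⟩ | h
      · rw [cn _ _ h]; tauto
      · rw [cp _ _ h]; tauto
      · rw [ct _ _ h]; tauto
    · have := hadjr _ _ hiv
      subst this
      rfl
  · rintro (i | i) v w hv hw hvw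
    · have hp := hprop i.val i.isLt
      rcases (hadj _ _).1 hv with ⟨j, rfl, h⟩ | ⟨j, rfl, h⟩ | h <;>
      rcases (hadj _ _).1 hw with ⟨k, rfl, h'⟩ | ⟨k, rfl, h'⟩ | h'
      · exact absurd (by rw [hsucc' _ _ h, hsucc' _ _ h']) hvw
      · rw [cn _ _ h, cp _ _ h']; exact hp.2.1.symm
      · rw [cn _ _ h, ct _ _ h']; exact hp.2.2.symm
      · rw [cp _ _ h, cn _ _ h']; exact hp.2.1
      · exact absurd (by rw [add_right_cancel ((hsucc' _ _ h).symm.trans (hsucc' _ _ h'))]) hvw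
      · rw [cp _ _ h, ct _ _ h']; exact hp.1
      · rw [ct _ _ h, cn _ _ h']; exact hp.2.2
      · rw [ct _ _ h, cp _ _ h']; exact hp.1.symm
      · exact absurd (huniq _ _ _ h h') hvw
    · exact absurd ((hadjr _ _ hv).trans (hadjr _ _ hw).symm) hvw
  · rintro v (i | i) w hv hw hvw
    · rcases (hadj _ _).1 hv with ⟨j, rfl, h⟩ | ⟨j, rfl, h⟩ | h <;>
      rcases (hadj _ _).1 hw with ⟨k, rfl, h'⟩ | ⟨k, rfl, h'⟩ | h'
      · exact absurd (by rw [hsucc' _ _ h, hsucc' _ _ h']) hvw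
      · rw [cn _ _ h, cp _ _ h']
        have := hV _ _ _ h' h
        simp only [S]; tauto
      · rw [cn _ _ h, ct _ _ h']; exact fun hh => (hS3 _ _ h').2 hh.2
      · rw [cp _ _ h, cn _ _ h']
        have := hV _ _ _ h h'
        simp only [S]; tauto
      · exact absurd (by rw [add_right_cancel ((hsucc' _ _ h).symm.trans (hsucc' _ _ h'))]) hvw
      · rw [cp _ _ h, ct _ _ h']; exact fun hh => (hS3 _ _ h').1 hh.2
      · rw [ct _ _ h, cn _ _ h']; exact fun hh => (hS3 _ _ h).2 hh.1
      · rw [ct _ _ h, cp _ _ h']; exact fun hh => (hS3 _ _ h).1 hh.1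
      · exact absurd (huniq _ _ _ h h') hvw
    · exact absurd ((hadjr _ _ hv).trans (hadjr _ _ hw).symm) hvw
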